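/- Let 𝒞 be a finite collection of pairwise disjoint nonempty finite subsets of ℝ^d, λ_g > 0, and let 𝒢 be a grouping of 𝒞. Let C ∈ G_i ∈ 𝒢 where G_i contains at least one cluster other than C, and let 𝒢' be the grouping obtained from 𝒢 by removing C from G_i and creating the new group {C}. Then E_g(𝒞,𝒢',λ_g) − E_g(𝒞,𝒢,λ_g) = λ_g|C|/(|G_i|(|G_i|−|C|)) + λ_g/|C| − (|G_i|·|C|/(|G_i|−|C|)) ‖ḡ_i − c̄‖², where c̄ is the centroid of C and ḡ_i is the centroid of the union of the clusters in G_i (before the removal). -/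

import Mathlib

/-!
For a single group `G` with size `|G|`, centroid `ḡ` and clusters `C` with centroids `c̄`, the
Koenig-Huygens identity gives `∑ |C| ‖ḡ - c̄‖² = ∑ |C| ‖c̄‖² - |G| ‖ḡ‖²`
(`sum_card_mul_norm_sq`), because disjointness of the clusters makes `|G| ḡ = ∑ |C| c̄`
(`groupSize_smul_centroid`). Only the terms of `Gi`, `Gi \ {C}` and `{C}` survive in the energy
difference, the last having no variance. With `M = |Gi|`, `w = |C|`, `m = M - w` and `h` the centroid
of the reduced group, `m h = M ḡ - w c̄`, so the change of the variance part is
`M ‖ḡ‖² - w ‖c̄‖² - m ‖h‖² = -(M w / m) ‖ḡ - c̄‖²` (`variance_change`), while the change of the size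
part is `1/m + 1/w - 1/M = w / (M m) + 1/w`.
-/

open scoped BigOperators Classical

/-- The centroid of a finite set of points in `ℝ^d`. -/
noncomputable def centroid {d : ℕ} (C : Finset (EuclideanSpace ℝ (Fin d))) :
    EuclideanSpace ℝ (Fin d) :=
  (C.card : ℝ)⁻¹ • ∑ x ∈ C, x

/-- The variance of a finite set of points in `ℝ^d`. -/
noncomputable def clVar {d : ℕ} (C : Finset (EuclideanSpace ℝ (Fin d))) : ℝ :=
  (C.card : ℝ)⁻¹ * ∑ x ∈ C, ‖centroid C - x‖ ^ 2

/-- `𝒢` is a partition of `X` into nonempty clusters. -/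
def IsPartition {d : ℕ} (X : Finset (EuclideanSpace ℝ (Fin d)))
    (𝒢 : Finset (Finset (EuclideanSpace ℝ (Fin d)))) : Prop :=
  (∀ C ∈ 𝒢, C.Nonempty) ∧
  (∀ C ∈ 𝒢, ∀ D ∈ 𝒢, C ≠ D → Disjoint C D) ∧
  𝒢.biUnion id = X

/-- The regularized k-means energy of a partition `𝒢` with parameter `lam`:
`E(X,𝒢,λ) = λ Σ_i 1/|G_i| + Σ_i Σ_{x ∈ G_i} ‖ḡ_i − x‖²`. -/
noncomputable def energy {d : ℕ} (𝒢 : Finset (Finset (EuclideanSpace ℝ (Fin d))))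
    (lam : ℝ) : ℝ :=
  lam * ∑ C ∈ 𝒢, (C.card : ℝ)⁻¹ + ∑ C ∈ 𝒢, ∑ x ∈ C, ‖centroid C - x‖ ^ 2

/-- The size of a group of clusters: the total number of points in its clusters. -/
def groupSize {d : ℕ} (G : Finset (Finset (EuclideanSpace ℝ (Fin d)))) : ℕ :=
  ∑ C ∈ G, C.card

/-- The union of the clusters in a group. -/
noncomputable def groupUnion {d : ℕ} (G : Finset (Finset (EuclideanSpace ℝ (Fin d)))) :
    Finset (EuclideanSpace ℝ (Fin d)) :=
  G.biUnion id

/-- `𝒞` is a finite collection of pairwise disjoint nonempty clusters. -/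
def IsClusterCollection {d : ℕ} (𝒞 : Finset (Finset (EuclideanSpace ℝ (Fin d)))) : Prop :=
  (∀ C ∈ 𝒞, C.Nonempty) ∧ (∀ C ∈ 𝒞, ∀ D ∈ 𝒞, C ≠ D → Disjoint C D)

/-- `𝒢` is a grouping of `𝒞`: a partition of `𝒞` into nonempty groups. -/
def IsGrouping {d : ℕ} (𝒞 : Finset (Finset (EuclideanSpace ℝ (Fin d))))
    (𝒢 : Finset (Finset (Finset (EuclideanSpace ℝ (Fin d))))) : Prop :=
  (∀ G ∈ 𝒢, G.Nonempty) ∧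
  (∀ G ∈ 𝒢, ∀ H ∈ 𝒢, G ≠ H → Disjoint G H) ∧
  𝒢.biUnion id = 𝒞

/-- The regularized set k-means (grouping) energy:
`E_g(𝒞,𝒢,λ_g) = λ_g Σ_G 1/|G| + Σ_G Σ_{C ∈ G} |C| ‖ḡ − c̄‖²`. -/
noncomputable def groupEnergy {d : ℕ}
    (𝒢 : Finset (Finset (Finset (EuclideanSpace ℝ (Fin d))))) (lam : ℝ) : ℝ :=
  lam * ∑ G ∈ 𝒢, (groupSize G : ℝ)⁻¹ +
    ∑ G ∈ 𝒢, ∑ C ∈ G, (C.card : ℝ) * ‖centroid (groupUnion G) - centroid C‖ ^ 2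

lemma card_smul_centroid {d : ℕ} (C : Finset (EuclideanSpace ℝ (Fin d))) (hC : C.Nonempty) :
    (C.card : ℝ) • centroid C = ∑ x ∈ C, x := by
  have h : (C.card : ℝ) ≠ 0 := by exact_mod_cast hC.card_pos.ne'
  rw [centroid, smul_inv_smul₀ h]

lemma groupUnion_card {d : ℕ} (G : Finset (Finset (EuclideanSpace ℝ (Fin d))))
    (hG : IsClusterCollection G) : (groupUnion G).card = groupSize G :=
  Finset.card_biUnion hG.2

/-- The centroid of a group is the average of the centroids of its clusters, weighted by
cardinality. -/
lemma groupSize_smul_centroid {d : ℕ} (G : Finset (Finset (EuclideanSpace ℝ (Fin d))))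
    (hG : IsClusterCollection G) :
    (groupSize G : ℝ) • centroid (groupUnion G) = ∑ C ∈ G, (C.card : ℝ) • centroid C := by
  rcases (groupUnion G).eq_empty_or_nonempty with h | h
  · have h0 : groupSize G = 0 := by rw [← groupUnion_card G hG, h, Finset.card_empty]
    have h1 : ∀ C ∈ G, C.card = 0 := Finset.sum_eq_zero_iff.mp h0
    rw [h0, Finset.sum_eq_zero fun C hC => by simp [h1 C hC]]
    simp
  · rw [← groupUnion_card G hG, card_smul_centroid _ h, groupUnion, Finset.sum_biUnion (t := id) hG.2]
    exact Finset.sum_congr rfl fun C hC => (card_smul_centroid C (hG.1 C hC)).symm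

/-- Koenig-Huygens identity for the clusters of a group. -/
lemma sum_card_mul_norm_sq {d : ℕ} (G : Finset (Finset (EuclideanSpace ℝ (Fin d))))
    (hG : IsClusterCollection G) :
    ∑ C ∈ G, (C.card : ℝ) * ‖centroid (groupUnion G) - centroid C‖ ^ 2 =
      ∑ C ∈ G, (C.card : ℝ) * ‖centroid C‖ ^ 2 -
        (groupSize G : ℝ) * ‖centroid (groupUnion G)‖ ^ 2 := by
  have hs := groupSize_smul_centroid G hG
  set g := centroid (groupUnion G)
  have hi : ∑ C ∈ G, (C.card : ℝ) * inner ℝ g (centroid C) = (groupSize G : ℝ) * ‖g‖ ^ 2 := by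
    rw [← real_inner_self_eq_norm_sq, ← real_inner_smul_right, hs, inner_sum]
    simp only [real_inner_smul_right]
  have hw : ∑ C ∈ G, (C.card : ℝ) * ‖g‖ ^ 2 = (groupSize G : ℝ) * ‖g‖ ^ 2 := by
    rw [← Finset.sum_mul, groupSize, Nat.cast_sum]
  calc ∑ C ∈ G, (C.card : ℝ) * ‖g - centroid C‖ ^ 2
      = ∑ C ∈ G, ((C.card : ℝ) * ‖g‖ ^ 2 - 2 * ((C.card : ℝ) * inner ℝ g (centroid C)) +
          (C.card : ℝ) * ‖centroid C‖ ^ 2) :=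
        Finset.sum_congr rfl fun C _ => by rw [norm_sub_sq_real]; ring
    _ = _ := by
        rw [Finset.sum_add_distrib, Finset.sum_sub_distrib, ← Finset.mul_sum, hi, hw]; ring

/-- The change of the variance part when a mass `w` at `c` is split off from a mass `m + w` with
centroid `g`, leaving a mass `m` with centroid `h`. -/
lemma variance_change {E : Type*} [NormedAddCommGroup E] [InnerProductSpace ℝ E]
    (m w : ℝ) (hm : m ≠ 0) (g h c : E) (hg : (m + w) • g = w • c + m • h) :
    (m + w) * ‖g‖ ^ 2 - w * ‖c‖ ^ 2 - m * ‖h‖ ^ 2 =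
      -((m + w) * w / m * ‖g - c‖ ^ 2) := by
  have hmh : m • h = (m + w) • g - w • c := by rw [hg]; abel
  have hn : m ^ 2 * ‖h‖ ^ 2 =
      (m + w) ^ 2 * ‖g‖ ^ 2 - 2 * ((m + w) * w * inner ℝ g c) + w ^ 2 * ‖c‖ ^ 2 := by
    have := congrArg (fun v => ‖v‖ ^ 2) hmh
    simp only [norm_sub_sq_real, norm_smul, mul_pow, Real.norm_eq_abs, sq_abs,
      real_inner_smul_left, real_inner_smul_right] at this
    rw [this]; ring
  rw [norm_sub_sq_real]
  field_simp
  linear_combination -hn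

/-- Equation (6): the change in grouping energy caused by removing a cluster `C` from its
group `G_i` (which contains at least one other cluster) and creating the new group `{C}`. -/
theorem stmt9 {d : ℕ} (𝒞 : Finset (Finset (EuclideanSpace ℝ (Fin d))))
    (h𝒞 : IsClusterCollection 𝒞) (lamg : ℝ) (hlam : 0 < lamg)
    (𝒢 : Finset (Finset (Finset (EuclideanSpace ℝ (Fin d)))))
    (hgrp : IsGrouping 𝒞 𝒢)
    (Gi : Finset (Finset (EuclideanSpace ℝ (Fin d)))) (hGi : Gi ∈ 𝒢)
    (C : Finset (EuclideanSpace ℝ (Fin d))) (hC : C ∈ Gi)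
    (hother : ∃ C' ∈ Gi, C' ≠ C)
    (𝒢' : Finset (Finset (Finset (EuclideanSpace ℝ (Fin d)))))
    (h𝒢' : 𝒢' = insert {C} (insert (Gi.erase C) (𝒢.erase Gi))) :
    groupEnergy 𝒢' lamg - groupEnergy 𝒢 lamg =
      lamg * (C.card : ℝ) / ((groupSize Gi : ℝ) * ((groupSize Gi : ℝ) - (C.card : ℝ))) +
        lamg / (C.card : ℝ) -
        (groupSize Gi : ℝ) * (C.card : ℝ) / ((groupSize Gi : ℝ) - (C.card : ℝ)) *
          ‖centroid (groupUnion Gi) - centroid C‖ ^ 2 := by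
  subst h𝒢'
  obtain ⟨C', hC', hne⟩ := hother
  -- The two new groups differ from each other and from the remaining ones, so no term of the
  -- sum over the new grouping is lost to a coincidence of groups.
  have hCH : C ∉ Gi.erase C := Finset.notMem_erase C Gi
  have hH𝒢 : Gi.erase C ∉ 𝒢.erase Gi := fun h => by
    obtain ⟨h1, h2⟩ := Finset.mem_erase.mp h
    exact Finset.disjoint_left.mp (hgrp.2.1 _ h2 _ hGi h1) (Finset.mem_erase.mpr ⟨hne, hC'⟩) hC'
  have hS𝒢 : ({C} : Finset _) ∉ insert (Gi.erase C) (𝒢.erase Gi) := fun h => by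
    rcases Finset.mem_insert.mp h with h | h
    · exact hCH (h ▸ Finset.mem_singleton_self C)
    · obtain ⟨h1, h2⟩ := Finset.mem_erase.mp h
      exact Finset.disjoint_left.mp (hgrp.2.1 _ h2 _ hGi h1) (Finset.mem_singleton_self C) hC
  have hsub : ∀ D ∈ Gi, D ∈ 𝒞 := fun D hD => by
    rw [← hgrp.2.2]; exact Finset.mem_biUnion.mpr ⟨Gi, hGi, hD⟩
  have hGcc : IsClusterCollection Gi :=
    ⟨fun D hD => h𝒞.1 D (hsub D hD), fun D hD F hF => h𝒞.2 D (hsub D hD) F (hsub F hF)⟩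
  have hHcc : IsClusterCollection (Gi.erase C) :=
    ⟨fun D hD => hGcc.1 D (Finset.mem_of_mem_erase hD),
      fun D hD F hF => hGcc.2 D (Finset.mem_of_mem_erase hD) F (Finset.mem_of_mem_erase hF)⟩
  have hw : (C.card : ℝ) ≠ 0 := by exact_mod_cast (hGcc.1 C hC).card_pos.ne'
  have hm : 0 < groupSize (Gi.erase C) :=
    Finset.sum_pos (fun D hD => (hHcc.1 D hD).card_pos) ⟨C', Finset.mem_erase.mpr ⟨hne, hC'⟩⟩
  have hm' : (groupSize (Gi.erase C) : ℝ) ≠ 0 := by exact_mod_cast hm.ne'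
  have hM : (groupSize Gi : ℝ) = groupSize (Gi.erase C) + C.card := by
    exact_mod_cast (Finset.sum_erase_add Gi Finset.card hC).symm
  have hM0 : (groupSize (Gi.erase C) : ℝ) + C.card ≠ 0 := by positivity
  have hcent := groupSize_smul_centroid Gi hGcc
  rw [← Finset.add_sum_erase Gi _ hC, ← groupSize_smul_centroid _ hHcc, hM] at hcent
  have hvar := variance_change _ _ hm' _ _ _ hcent
  have hV := sum_card_mul_norm_sq Gi hGcc
  rw [← Finset.add_sum_erase Gi (fun D => (D.card : ℝ) * ‖centroid D‖ ^ 2) hC, hM] at hV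
  have hVH := sum_card_mul_norm_sq _ hHcc
  have hsize : groupSize ({C} : Finset _) = C.card := by simp [groupSize]
  have hunion : groupUnion ({C} : Finset _) = C := by simp [groupUnion]
  have hlam_part : lamg * ((C.card : ℝ)⁻¹ + (groupSize (Gi.erase C) : ℝ)⁻¹
        - ((groupSize (Gi.erase C) : ℝ) + C.card)⁻¹) =
      lamg * C.card / ((groupSize (Gi.erase C) + C.card) * groupSize (Gi.erase C)) +
        lamg / C.card := by
    field_simp
    ring
  unfold groupEnergy
  rw [Finset.sum_insert hS𝒢, Finset.sum_insert hH𝒢, Finset.sum_insert hS𝒢,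
    Finset.sum_insert hH𝒢, ← Finset.add_sum_erase 𝒢 _ hGi, ← Finset.add_sum_erase 𝒢 _ hGi,
    hV, hVH, hsize, Finset.sum_singleton, hunion, sub_self, norm_zero, hM, add_sub_cancel_right]
  linear_combination hlam_part + hvar
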